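/- Let d ≥ 2 and 1 ≤ p < 2d/(d+1). There is a constant C_p (depending also on d and ψ) such that for every measurable function κ : (0,∞) → ℂ with ∫_0^∞ |κ(r)|^p r^{d−1} dr < ∞, the radial kernel K = ∫_0^∞ κ(r) σ_r dr satisfies ‖K̂ · ψ̂‖_{L^∞(ℝ^d)} ≤ C_p (∫_0^∞ |κ(r)|^p r^{d−1} dr)^{1/p}. -/

import Mathlib

open MeasureTheory Metric Set
open scoped FourierTransform ENNReal NNReal

open scoped RealInnerProductSpace
noncomputable section

abbrev Ed (d : ℕ) := EuclideanSpace ℝ (Fin d)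

/-- Surface measure on the sphere of radius `r` centered at the origin in `ℝ^d`:
the `(d-1)`-dimensional Hausdorff measure restricted to the sphere. -/
def sphereM (d : ℕ) (r : ℝ) : Measure (Ed d) :=
  (μH[(d : ℝ) - 1]).restrict (Metric.sphere (0 : Ed d) r)

/-- `ψ₀` is admissible: radial, `C^∞`, supported in the ball of radius `1/10`, and
its Fourier transform vanishes to order `20d` at the origin. -/
def Admissible (d : ℕ) (ψ₀ : Ed d → ℂ) : Prop :=
  ContDiff ℝ (⊤ : ℕ∞) ψ₀ ∧
  (∀ x, ψ₀ x ≠ 0 → ‖x‖ ≤ 1 / 10) ∧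
  (∀ x y : Ed d, ‖x‖ = ‖y‖ → ψ₀ x = ψ₀ y) ∧
  (∀ n : ℕ, n < 20 * d → iteratedFDeriv ℝ n (𝓕 ψ₀) 0 = 0)

/-- `ψ = ψ₀ * ψ₀` (convolution). -/
def psiOf (d : ℕ) (ψ₀ : Ed d → ℂ) : Ed d → ℂ :=
  fun x => ∫ y, ψ₀ y * ψ₀ (x - y)

/-- `F_{y,r} = σ_r * ψ(· - y)`. -/
def Fyr (d : ℕ) (ψ₀ : Ed d → ℂ) (y : Ed d) (r : ℝ) : Ed d → ℂ :=
  fun x => ∫ z, psiOf d ψ₀ (x - y - z) ∂(sphereM d r)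

lemma bessel_decay (k : ℕ) (f f1 f2 : ℝ → ℝ) (h1 : ∀ s, HasDerivAt f (f1 s) s)
    (h2 : ∀ s, HasDerivAt f1 (f2 s) s)
    (ode : ∀ s, 0 < s → s * f2 s + (k + 1) * f1 s + s * f s = 0) :
    ∃ B : ℝ, ∀ s, 1 ≤ s → s ^ (k + 1) * f s ^ 2 ≤ B := by
  set m : ℝ := (k + 1) / 2 with hm
  set c : ℝ := |m ^ 2 - m| with hc
  set g : ℝ → ℝ := fun s => f1 s + m * (f s / s) with hg
  have hgd : ∀ s, 0 < s → HasDerivAt g (-f s - m / s * g s + (m ^ 2 - m) / s ^ 2 * f s) s := by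
    intro s hs
    have := (h2 s).add ((((h1 s).div (hasDerivAt_id s) hs.ne')).const_mul m)
    refine this.congr_deriv ?_
    have e : f2 s = -(2 * m) / s * f1 s - f s := by
      have := ode s hs
      field_simp
      rw [hm]; linarith
    rw [e]
    simp only [id, hg]
    field_simp
    ring
  set E : ℝ → ℝ := fun s => s ^ (k + 1) * (f s ^ 2 + g s ^ 2) * Real.exp (c / s) with hE
  have hEd : ∀ s, 0 < s → HasDerivAt E
      (s ^ (k + 1) * Real.exp (c / s) / s ^ 2 *
        (2 * (m ^ 2 - m) * f s * g s - c * (f s ^ 2 + g s ^ 2))) s := by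
    intro s hs
    have hx := (((hasDerivAt_pow (k + 1) s).mul (((h1 s).pow 2).add ((hgd s hs).pow 2))).mul
      (((hasDerivAt_inv hs.ne').const_mul c).exp))
    have hx2 := hx.congr_of_eventuallyEq (f₁ := E) (by
      filter_upwards with t
      simp [hE, div_eq_mul_inv])
    refine hx2.congr_deriv ?_
    have e1 : f1 s = g s - m / s * f s := by simp only [hg]; ring
    have e2 : (((k + 1 : ℕ) : ℝ)) = 2 * m := by rw [hm]; push_cast; ring
    simp only [e2, e1, Nat.add_sub_cancel, Pi.pow_apply, Pi.add_apply, Pi.mul_apply]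
    rw [← div_eq_mul_inv]
    generalize Real.exp (c / s) = X
    field_simp
    ring
  have anti : AntitoneOn E (Ici 1) := by
    apply antitoneOn_of_deriv_nonpos (convex_Ici 1)
    · intro s hs
      exact (hEd s (lt_of_lt_of_le one_pos hs)).continuousAt.continuousWithinAt
    · intro s hs
      rw [interior_Ici] at hs
      exact (hEd s (lt_trans one_pos hs)).differentiableAt.differentiableWithinAt
    · intro s hs
      rw [interior_Ici] at hs
      have hs0 : 0 < s := lt_trans one_pos hs
      rw [(hEd s hs0).deriv]
      apply mul_nonpos_of_nonneg_of_nonpos (by positivity)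
      have a1 : |2 * (m ^ 2 - m) * f s * g s| ≤ c * (f s ^ 2 + g s ^ 2) := by
        have : 2 * (m ^ 2 - m) * f s * g s = (m ^ 2 - m) * (2 * f s * g s) := by ring
        rw [this, abs_mul]
        apply mul_le_mul_of_nonneg_left _ (abs_nonneg _)
        rw [abs_le]; constructor <;> nlinarith [sq_nonneg (f s + g s), sq_nonneg (f s - g s)]
      linarith [le_abs_self (2 * (m ^ 2 - m) * f s * g s)]
  refine ⟨E 1, fun s hs => ?_⟩
  have := anti (mem_Ici.2 le_rfl) (mem_Ici.2 hs) hs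
  refine le_trans ?_ this
  have hs0 : 0 < s := lt_of_lt_of_le one_pos hs
  simp only [hE]
  have h3 : 1 ≤ Real.exp (c / s) := Real.one_le_exp (by positivity)
  have h4 : s ^ (k + 1) * f s ^ 2 ≤ s ^ (k + 1) * (f s ^ 2 + g s ^ 2) := by
    gcongr; linarith [sq_nonneg (g s)]
  have h5 : 0 ≤ s ^ (k + 1) * (f s ^ 2 + g s ^ 2) := by positivity
  nlinarith

/-- rotation-invariant finite measure on the unit sphere -/
structure RotInv (d : ℕ) (μ : Measure (Ed d)) : Prop where
  fin : IsFiniteMeasure μ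
  unit : ∀ᵐ x ∂μ, ‖x‖ = 1
  inv : ∀ L : Ed d ≃ₗᵢ[ℝ] Ed d, MeasurePreserving L μ μ

lemma RotInv.integral_comp {d : ℕ} {μ : Measure (Ed d)} (h : RotInv d μ)
    {F : Type*} [NormedAddCommGroup F] [NormedSpace ℝ F]
    (L : Ed d ≃ₗᵢ[ℝ] Ed d) (g : Ed d → F) : ∫ x, g (L x) ∂μ = ∫ x, g x ∂μ :=
  (h.inv L).integral_comp L.toHomeomorph.measurableEmbedding g

lemma RotInv.odd {d : ℕ} {μ : Measure (Ed d)} (h : RotInv d μ) (u v : Ed d) (huv : ⟪v, u⟫ = 0)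
    (s : ℝ) : ∫ x, ⟪v, x⟫ * Real.sin (s * ⟪u, x⟫) ∂μ = 0 := by
  set L := (Submodule.span ℝ {v})ᗮ.reflection with hL
  have key := h.integral_comp L (fun x => ⟪v, x⟫ * Real.sin (s * ⟪u, x⟫))
  have hv : ∀ x, ⟪v, L x⟫ = -⟪v, x⟫ := by
    intro x
    rw [← L.inner_map_map v (L x), hL, Submodule.reflection_reflection,
      Submodule.reflection_orthogonalComplement_singleton_eq_neg, inner_neg_left]
  have hu : ∀ x, ⟪u, L x⟫ = ⟪u, x⟫ := by
    intro x
    rw [← L.inner_map_map u (L x), hL, Submodule.reflection_reflection,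
      Submodule.reflection_mem_subspace_eq_self]
    rw [Submodule.mem_orthogonal_singleton_iff_inner_right]
    exact huv
  simp only [hv, hu, neg_mul, integral_neg] at key
  linarith

lemma RotInv.abs_le {d : ℕ} {x : Ed d} (h : ‖x‖ = 1) (j : Fin d) : |x j| ≤ 1 := by
  have := PiLp.norm_apply_le x j
  rw [h] at this; simpa using this

lemma RotInv.int {d : ℕ} {μ : Measure (Ed d)} (h : RotInv d μ) (g : Ed d → ℝ)
    (hg : Continuous g) (C : ℝ) (hC : ∀ x, ‖x‖ = 1 → |g x| ≤ C) : Integrable g μ := by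
  have := h.fin
  refine Integrable.of_bound hg.aestronglyMeasurable C ?_
  filter_upwards [h.unit] with x hx using hC x hx

lemma RotInv.deriv {d : ℕ} {μ : Measure (Ed d)} (h : RotInv d μ) (F F' : ℝ → Ed d → ℝ)
    (hF : ∀ s, Continuous (F s)) (hF' : ∀ s, Continuous (F' s)) (s₀ C : ℝ)
    (hC : ∀ x, ‖x‖ = 1 → |F s₀ x| ≤ C) (C' : ℝ)
    (hC' : ∀ s x, ‖x‖ = 1 → |F' s x| ≤ C')
    (hd : ∀ s x, HasDerivAt (fun s => F s x) (F' s x) s) :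
    HasDerivAt (fun s => ∫ x, F s x ∂μ) (∫ x, F' s₀ x ∂μ) s₀ := by
  have := h.fin
  refine (hasDerivAt_integral_of_dominated_loc_of_deriv_le (bound := fun _ => C')
    (s := univ) Filter.univ_mem (Filter.Eventually.of_forall fun s => (hF s).aestronglyMeasurable)
    (h.int _ (hF _) C hC) (hF' s₀).aestronglyMeasurable ?_ (integrable_const _) ?_).2
  · filter_upwards [h.unit] with x hx s _ using hC' s x hx
  · filter_upwards with x s _ using hd s x

lemma RotInv.ident {d : ℕ} {μ : Measure (Ed d)} (h : RotInv d μ) (i j : Fin d) (hij : j ≠ i)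
    (s : ℝ) : ∫ x : Ed d, (-(x i) * Real.sin (s * x i) + s * ((x j) ^ 2 * Real.cos (s * x i))) ∂μ
      = 0 := by
  have h0 : ∀ θ : ℝ, ∫ x : Ed d, (Real.cos θ * x j - Real.sin θ * x i) *
      Real.sin (s * (Real.cos θ * x i + Real.sin θ * x j)) ∂μ = 0 := by
    intro θ
    have := h.odd (Real.cos θ • EuclideanSpace.single i (1 : ℝ) +
      Real.sin θ • EuclideanSpace.single j (1 : ℝ))
      (Real.cos θ • EuclideanSpace.single j (1 : ℝ) -
      Real.sin θ • EuclideanSpace.single i (1 : ℝ)) (by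
        simp [inner_add_right, inner_sub_left, inner_smul_left, inner_smul_right,
          EuclideanSpace.inner_single_left, hij, hij.symm]; ring) s
    simpa [inner_add_left, inner_sub_left, inner_smul_left, EuclideanSpace.inner_single_left]
      using this
  have hD := h.deriv (fun θ x => (Real.cos θ * x j - Real.sin θ * x i) *
      Real.sin (s * (Real.cos θ * x i + Real.sin θ * x j)))
    (fun θ x => (-Real.sin θ * x j - Real.cos θ * x i) *
      Real.sin (s * (Real.cos θ * x i + Real.sin θ * x j)) +
      (Real.cos θ * x j - Real.sin θ * x i) *
      (Real.cos (s * (Real.cos θ * x i + Real.sin θ * x j)) *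
        (s * (-Real.sin θ * x i + Real.cos θ * x j))))
    (fun θ => by fun_prop) (fun θ => by fun_prop) 0 1 (by
      intro x hx
      have := RotInv.abs_le hx j
      simp only [Real.cos_zero, Real.sin_zero, one_mul, zero_mul, sub_zero, add_zero, abs_mul]
      calc _ ≤ (1 : ℝ) * 1 := mul_le_mul this (Real.abs_sin_le_one _) (abs_nonneg _) zero_le_one
        _ = 1 := by norm_num) (2 + 2 * (|s| * 2)) (by
      intro θ x hx
      have a1 := RotInv.abs_le hx j
      have a2 := RotInv.abs_le hx i
      have b : ∀ u v a b : ℝ, |u| ≤ 1 → |v| ≤ 1 → |a| ≤ 1 → |b| ≤ 1 → |u * a + v * b| ≤ 2 := by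
        intro u v a b hu hv ha hb
        calc _ ≤ |u * a| + |v * b| := abs_add_le _ _
          _ ≤ 1 * 1 + 1 * 1 := by
            rw [abs_mul, abs_mul]; gcongr
          _ = 2 := by norm_num
      have c0 := Real.abs_cos_le_one θ
      have s0 := Real.abs_sin_le_one θ
      have b1 : |-Real.sin θ * x j - Real.cos θ * x i| ≤ 2 := by
        have := b (-Real.sin θ) (-Real.cos θ) (x j) (x i) (by rwa [abs_neg]) (by rwa [abs_neg]) a1 a2
        rwa [neg_mul (Real.cos θ), ← sub_eq_add_neg] at this
      have b2 : |Real.cos θ * x j - Real.sin θ * x i| ≤ 2 := by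
        have := b (Real.cos θ) (-Real.sin θ) (x j) (x i) c0 (by rwa [abs_neg]) a1 a2
        rwa [neg_mul, ← sub_eq_add_neg] at this
      have b3 : |-Real.sin θ * x i + Real.cos θ * x j| ≤ 2 :=
        b _ _ _ _ (by rwa [abs_neg]) c0 a2 a1
      refine (abs_add_le _ _).trans ?_
      simp only [abs_mul _ (Real.sin (s * _)), abs_mul _ (Real.cos _ * _), abs_mul (Real.cos (s * _)),
        abs_mul s]
      have c1 := Real.abs_cos_le_one (s * (Real.cos θ * x i + Real.sin θ * x j))
      have s1 := Real.abs_sin_le_one (s * (Real.cos θ * x i + Real.sin θ * x j))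
      calc _ ≤ (2 : ℝ) * 1 + 2 * (1 * (|s| * 2)) := by gcongr
        _ = _ := by ring) (by
      intro θ x
      have hc := Real.hasDerivAt_cos θ
      have hs := Real.hasDerivAt_sin θ
      exact (((hc.mul_const (x j)).sub (hs.mul_const (x i))).mul
        ((((hc.mul_const (x i)).add (hs.mul_const (x j))).const_mul s).sin)))
  simp only [h0] at hD
  have := hD.unique (hasDerivAt_const (0 : ℝ) (0 : ℝ))
  rw [← this]
  congr 1
  ext x
  simp
  ring

lemma RotInv.decay {d : ℕ} (hd : 2 ≤ d) {μ : Measure (Ed d)} (h : RotInv d μ) (i : Fin d) :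
    ∃ B : ℝ, ∀ s, 1 ≤ s → s ^ (d - 1) * (∫ x : Ed d, Real.cos (s * x i) ∂μ) ^ 2 ≤ B := by
  obtain ⟨k, rfl⟩ : ∃ k, d = k + 2 := ⟨d - 2, by omega⟩
  have hc1 : ∀ t : ℝ, |Real.cos t| ≤ 1 := Real.abs_cos_le_one
  have hs1 : ∀ t : ℝ, |Real.sin t| ≤ 1 := Real.abs_sin_le_one
  apply bessel_decay k (fun s => ∫ x : Ed (k + 2), Real.cos (s * x i) ∂μ)
    (fun s => ∫ x : Ed (k + 2), -(x i) * Real.sin (s * x i) ∂μ)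
    (fun s => ∫ x : Ed (k + 2), -(x i) ^ 2 * Real.cos (s * x i) ∂μ)
  · intro s
    apply h.deriv (fun s x => Real.cos (s * x i)) (fun s x => -(x i) * Real.sin (s * x i))
      (fun s => by fun_prop) (fun s => by fun_prop) s 1 (fun x _ => hc1 _) 1
    · intro s x hx
      rw [abs_mul, abs_neg]
      exact mul_le_one₀ (RotInv.abs_le hx i) (abs_nonneg _) (hs1 _)
    · intro s x
      refine (((hasDerivAt_id s).mul_const (x i)).cos).congr_deriv ?_
      simp; ring
  · intro s
    apply h.deriv (fun s x => -(x i) * Real.sin (s * x i))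
      (fun s x => -(x i) ^ 2 * Real.cos (s * x i))
      (fun s => by fun_prop) (fun s => by fun_prop) s 1 _ 1
    · intro s x hx
      rw [abs_mul, abs_neg, abs_pow]
      exact mul_le_one₀ (pow_le_one₀ (abs_nonneg _) (RotInv.abs_le hx i)) (abs_nonneg _) (hc1 _)
    · intro s x
      refine ((((hasDerivAt_id s).mul_const (x i)).sin).const_mul (-(x i))).congr_deriv ?_
      simp; ring
    · intro x hx
      rw [abs_mul, abs_neg]
      exact mul_le_one₀ (RotInv.abs_le hx i) (abs_nonneg _) (hs1 _)
  · intro s hs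
    have i1 : Integrable (fun x : Ed (k + 2) => -(x i) * Real.sin (s * x i)) μ := by
      apply h.int _ (by fun_prop) 1
      intro x hx
      rw [abs_mul, abs_neg]
      exact mul_le_one₀ (RotInv.abs_le hx i) (abs_nonneg _) (hs1 _)
    have i2 : ∀ j, Integrable (fun x : Ed (k + 2) => (x j) ^ 2 * Real.cos (s * x i)) μ := by
      intro j
      apply h.int _ (by fun_prop) 1
      intro x hx
      rw [abs_mul, abs_pow]
      exact mul_le_one₀ (pow_le_one₀ (abs_nonneg _) (RotInv.abs_le hx j)) (abs_nonneg _) (hc1 _)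
    have id1 : ∀ j, j ≠ i → s * ∫ x : Ed (k + 2), (x j) ^ 2 * Real.cos (s * x i) ∂μ
        = - ∫ x : Ed (k + 2), -(x i) * Real.sin (s * x i) ∂μ := by
      intro j hj
      have := h.ident i j hj s
      rw [integral_add i1 ((i2 j).const_mul s), integral_const_mul] at this
      linarith
    have sumid : ∑ j, ∫ x : Ed (k + 2), (x j) ^ 2 * Real.cos (s * x i) ∂μ
        = ∫ x : Ed (k + 2), Real.cos (s * x i) ∂μ := by
      rw [← integral_finsetSum _ (fun j _ => i2 j)]
      apply integral_congr_ae
      filter_upwards [h.unit] with x hx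
      rw [← Finset.sum_mul]
      have : ∑ j, (x j) ^ 2 = 1 := by
        rw [← EuclideanSpace.real_norm_sq_eq, hx]; norm_num
      rw [this, one_mul]
    have e3 : ∫ x : Ed (k + 2), -(x i) ^ 2 * Real.cos (s * x i) ∂μ
      = - ∫ x : Ed (k + 2), (x i) ^ 2 * Real.cos (s * x i) ∂μ := by
      rw [← integral_neg]; simp only [neg_mul]
    rw [e3, ← sumid, ← Finset.add_sum_erase _ _ (Finset.mem_univ i), mul_add, Finset.mul_sum,
      Finset.sum_congr rfl (fun j hj => id1 j (Finset.ne_of_mem_erase hj)), Finset.sum_const,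
      Finset.card_erase_of_mem (Finset.mem_univ i)]
    simp
    ring

open scoped Pointwise in
lemma sphere_scale (d : ℕ) (hd : 2 ≤ d) (r : ℝ) (hr : 0 < r) :
    sphereM d r = ENNReal.ofReal (r ^ (d - 1)) • (sphereM d 1).map (fun x => r • x) := by
  have hme : Measurable (fun x : Ed d => r • x) := measurable_const_smul r
  ext s hs
  rw [Measure.smul_apply, Measure.map_apply hme hs, sphereM, sphereM,
    Measure.restrict_apply hs, Measure.restrict_apply (hme hs)]
  have e : s ∩ sphere (0 : Ed d) r = r • ((fun x : Ed d => r • x) ⁻¹' s ∩ sphere 0 1) := by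
    ext x
    rw [Set.mem_smul_set_iff_inv_smul_mem₀ hr.ne']
    simp only [mem_inter_iff, mem_preimage, mem_sphere_zero_iff_norm, smul_inv_smul₀ hr.ne',
      norm_smul, norm_inv, Real.norm_eq_abs, abs_of_pos hr]
    rw [inv_mul_eq_one₀ hr.ne', eq_comm (a := r)]
  have hd1 : (0 : ℝ) ≤ (d : ℝ) - 1 := by
    have : (2 : ℝ) ≤ d := by exact_mod_cast hd
    linarith
  rw [e, Measure.hausdorffMeasure_smul₀ hd1 hr.ne', ENNReal.smul_def, smul_eq_mul, smul_eq_mul]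
  congr 1
  have : (d : ℝ) - 1 = ((d - 1 : ℕ) : ℝ) := by
    rw [Nat.cast_sub (by omega)]; simp
  rw [this, NNReal.rpow_natCast, ENNReal.ofReal_pow hr.le, ENNReal.coe_pow]
  congr 1
  rw [← enorm_eq_nnnorm, Real.enorm_eq_ofReal hr.le]

lemma sphere_rotInv (d : ℕ) [IsFiniteMeasure (sphereM d 1)] : RotInv d (sphereM d 1) := by
  refine ⟨inferInstance, ?_, ?_⟩
  · rw [sphereM]
    filter_upwards [ae_restrict_mem isClosed_sphere.measurableSet] with x hx
    simpa using hx
  · intro L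
    have := (L.toIsometryEquiv.measurePreserving_hausdorffMeasure ((d : ℝ) - 1)).restrict_preimage
      (isClosed_sphere (x := (0 : Ed d)) (ε := 1)).measurableSet
    have e : (L.toIsometryEquiv) ⁻¹' (sphere (0 : Ed d) 1) = sphere 0 1 := by
      ext x; simp
    rw [e] at this
    exact this

lemma RotInv.fourier {d : ℕ} {μ : Measure (Ed d)} (h : RotInv d μ) (i : Fin d) (ξ : Ed d) :
    ∫ x, Complex.exp (-(((2 * Real.pi * ⟪ξ, x⟫) : ℝ) : ℂ) * Complex.I) ∂μ =
      ((∫ x : Ed d, Real.cos ((2 * Real.pi * ‖ξ‖) * x i) ∂μ : ℝ) : ℂ) := by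
  set L := (Submodule.span ℝ {ξ - ‖ξ‖ • EuclideanSpace.single i (1 : ℝ)})ᗮ.reflection with hL
  have hLξ : L ξ = ‖ξ‖ • EuclideanSpace.single i (1 : ℝ) := by
    apply Submodule.reflection_sub
    simp [norm_smul]
  have e1 : ∀ x, ⟪ξ, L x⟫ = ‖ξ‖ * x i := by
    intro x
    rw [← L.inner_map_map ξ (L x), hLξ, hL, Submodule.reflection_reflection]
    simp [inner_smul_left, EuclideanSpace.inner_single_left]
  rw [← h.integral_comp L]
  simp only [e1]
  set s := 2 * Real.pi * ‖ξ‖ with hs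
  have e2 : ∀ x : Ed d, Complex.exp (-(((2 * Real.pi * (‖ξ‖ * x i)) : ℝ) : ℂ) * Complex.I)
      = ((Real.cos (s * x i) : ℝ) : ℂ) - ((Real.sin (s * x i) : ℝ) : ℂ) * Complex.I := by
    intro x
    rw [← mul_assoc, ← hs, Complex.exp_mul_I, Complex.cos_neg, Complex.sin_neg]
    push_cast; ring
  simp only [e2]
  have ic : Integrable (fun x : Ed d => Real.cos (s * x i)) μ :=
    h.int _ (by fun_prop) 1 (fun x _ => Real.abs_cos_le_one _)
  have is : Integrable (fun x : Ed d => Real.sin (s * x i)) μ :=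
    h.int _ (by fun_prop) 1 (fun x _ => Real.abs_sin_le_one _)
  have z : ∫ x : Ed d, Real.sin (s * x i) ∂μ = 0 := by
    have := h.integral_comp (LinearIsometryEquiv.neg ℝ) (fun x : Ed d => Real.sin (s * x i))
    simp [integral_neg] at this
    linarith
  rw [integral_sub ic.ofReal (is.ofReal.mul_const _), integral_mul_const]
  have o1 : ∫ x : Ed d, ((Real.cos (s * x i) : ℝ) : ℂ) ∂μ = ((∫ x : Ed d, Real.cos (s * x i) ∂μ : ℝ) : ℂ) :=
    integral_ofReal
  have o2 : ∫ x : Ed d, ((Real.sin (s * x i) : ℝ) : ℂ) ∂μ = ((∫ x : Ed d, Real.sin (s * x i) ∂μ : ℝ) : ℂ) :=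
    integral_ofReal
  refine (congrArg₂ (fun a b : ℂ => a - b * Complex.I) o1 o2).trans ?_
  simp [z]

lemma sphere_fourier_bound (d : ℕ) (hd : 2 ≤ d) :
    ∃ A : ℝ, 0 ≤ A ∧ ∀ r : ℝ, 0 < r → ∀ ξ : Ed d,
      ‖∫ x, Complex.exp (-(((2 * Real.pi * ⟪ξ, x⟫) : ℝ) : ℂ) * Complex.I) ∂(sphereM d r)‖ ≤
        A * r ^ (d - 1) ∧
      (ξ ≠ 0 → ‖∫ x, Complex.exp (-(((2 * Real.pi * ⟪ξ, x⟫) : ℝ) : ℂ) * Complex.I)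
        ∂(sphereM d r)‖ ≤ A * r ^ (d - 1) * (r * ‖ξ‖) ^ (-(((d : ℝ) - 1) / 2))) := by
  have scale : ∀ r : ℝ, 0 < r → ∀ ξ : Ed d,
      ∫ x, Complex.exp (-(((2 * Real.pi * ⟪ξ, x⟫) : ℝ) : ℂ) * Complex.I) ∂(sphereM d r) =
      ((r ^ (d - 1) : ℝ) : ℂ) * ∫ x, Complex.exp (-(((2 * Real.pi * ⟪r • ξ, x⟫) : ℝ) : ℂ) * Complex.I)
        ∂(sphereM d 1) := by
    intro r hr ξ
    rw [sphere_scale d hd r hr, integral_smul_measure,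
      integral_map (measurable_const_smul r).aemeasurable
        (Continuous.aestronglyMeasurable (by fun_prop))]
    rw [ENNReal.toReal_ofReal (by positivity), Complex.real_smul]
    simp only [real_inner_smul_left, real_inner_smul_right]
  have hm0 : 0 ≤ ((d : ℝ) - 1) / 2 := by
    have : (2 : ℝ) ≤ d := by exact_mod_cast hd
    linarith
  by_cases hfin : IsFiniteMeasure (sphereM d 1)
  · have h := sphere_rotInv d
    let i : Fin d := ⟨0, by omega⟩
    obtain ⟨B, hB⟩ := h.decay hd i
    set M := (sphereM d 1).real univ with hM
    have hf : ∀ s, |∫ x : Ed d, Real.cos (s * x i) ∂(sphereM d 1)| ≤ M := by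
      intro s
      have := norm_integral_le_of_norm_le_const (μ := sphereM d 1) (C := 1)
        (f := fun x : Ed d => Real.cos (s * x i))
        (Filter.Eventually.of_forall fun x => Real.abs_cos_le_one _)
      simpa using this
    refine ⟨max M (Real.sqrt B), le_max_of_le_left measureReal_nonneg, ?_⟩
    intro r hr ξ
    rw [scale r hr, h.fourier i, norm_mul, Complex.norm_real, Complex.norm_real,
      Real.norm_eq_abs, Real.norm_eq_abs, abs_of_nonneg (by positivity : 0 ≤ r ^ (d - 1)),
      norm_smul, Real.norm_eq_abs, abs_of_pos hr]
    constructor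
    · rw [mul_comm]
      gcongr
      exact (hf _).trans (le_max_left _ _)
    · intro hξ
      have hξ' : 0 < ‖ξ‖ := norm_pos_iff.2 hξ
      set t := r * ‖ξ‖ with ht
      have htp : 0 < t := by positivity
      suffices hmain : |∫ x : Ed d, Real.cos (2 * Real.pi * t * x i) ∂(sphereM d 1)| ≤
          max M (Real.sqrt B) * t ^ (-(((d : ℝ) - 1) / 2)) by
        refine (mul_le_mul_of_nonneg_left hmain (by positivity : 0 ≤ r ^ (d - 1))).trans
          (le_of_eq ?_)
        ring
      by_cases hs : 1 ≤ 2 * Real.pi * t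
      · have h1 := hB _ hs
        set y := ∫ x : Ed d, Real.cos (2 * Real.pi * t * x i) ∂(sphereM d 1)
        have h2 : t ^ (d - 1) * y ^ 2 ≤ B := by
          refine le_trans ?_ h1
          gcongr
          nlinarith [Real.pi_gt_three]
        have h3 : (t ^ (((d : ℝ) - 1) / 2)) ^ 2 = t ^ (d - 1) := by
          rw [← Real.rpow_natCast, ← Real.rpow_mul htp.le, ← Real.rpow_natCast]
          congr 1
          rw [Nat.cast_sub (by omega)]; push_cast; ring
        rw [← h3, ← mul_pow] at h2
        have h4 := Real.abs_le_sqrt h2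
        have h5 : 0 < t ^ (((d : ℝ) - 1) / 2) := Real.rpow_pos_of_pos htp _
        rw [abs_mul, abs_of_pos h5] at h4
        rw [Real.rpow_neg htp.le, ← div_eq_mul_inv, le_div_iff₀ h5, mul_comm]
        exact h4.trans (le_max_right _ _)
      · have ht1 : t ≤ 1 := by
          push Not at hs
          nlinarith [Real.pi_gt_three]
        have h6 : 1 ≤ t ^ (-(((d : ℝ) - 1) / 2)) :=
          Real.one_le_rpow_of_pos_of_le_one_of_nonpos htp ht1 (by linarith)
        have := (hf (2 * Real.pi * t)).trans (le_max_left M (Real.sqrt B))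
        have h0 : 0 ≤ max M (Real.sqrt B) := (abs_nonneg _).trans this
        nlinarith
  · refine ⟨0, le_rfl, fun r hr ξ => ?_⟩
    have z : ∫ x, Complex.exp (-(((2 * Real.pi * ⟪r • ξ, x⟫) : ℝ) : ℂ) * Complex.I)
        ∂(sphereM d 1) = 0 := by
      apply integral_undef
      intro hi
      have hn := hi.norm
      have : ∀ x : Ed d, ‖Complex.exp (-(((2 * Real.pi * ⟪r • ξ, x⟫) : ℝ) : ℂ) * Complex.I)‖ = 1 := by
        intro x
        rw [← Complex.ofReal_neg, Complex.norm_exp_ofReal_mul_I]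
      simp only [this] at hn
      rw [integrable_const_iff] at hn
      rcases hn with hn | hn
      · norm_num at hn
      · exact hfin hn
    rw [scale r hr, z]
    simp

lemma taylor_vanish {E F : Type*} [NormedAddCommGroup E] [NormedSpace ℝ E]
    [NormedAddCommGroup F] [NormedSpace ℝ F] (Φ : E → F) (n : ℕ) (hΦ : ContDiff ℝ n Φ)
    (h0 : ∀ k < n, iteratedFDeriv ℝ k Φ 0 = 0) (B : ℝ)
    (hB : ∀ x, ‖iteratedFDeriv ℝ n Φ x‖ ≤ B) (x : E) : ‖Φ x‖ ≤ B * ‖x‖ ^ n := by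
  have hB0 : 0 ≤ B := (norm_nonneg _).trans (hB 0)
  have key : ∀ j ≤ n, ∀ x, ‖iteratedFDeriv ℝ (n - j) Φ x‖ ≤ B * ‖x‖ ^ j := by
    intro j
    induction j with
    | zero => intro _ x; simpa using hB x
    | succ j ih =>
      intro hj x
      have ih' := ih (by omega)
      obtain ⟨k, hk⟩ : ∃ k, k = n - (j + 1) := ⟨_, rfl⟩
      have hk1 : n - j = k + 1 := by omega
      rw [hk1] at ih'
      rw [← hk]
      have := (convex_closedBall (0 : E) ‖x‖).norm_image_sub_le_of_norm_fderiv_le (𝕜 := ℝ)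
        (f := iteratedFDeriv ℝ k Φ) (C := B * ‖x‖ ^ j) (x := 0) (y := x)
        (fun y _ => (hΦ.differentiable_iteratedFDeriv (by exact_mod_cast (by omega : k < n))) y)
        (fun y hy => by
          rw [norm_fderiv_iteratedFDeriv]
          refine (ih' y).trans ?_
          have : ‖y‖ ≤ ‖x‖ := by simpa using hy
          gcongr) (by simp) (by simp)
      rw [h0 k (by omega)] at this
      simpa [pow_succ, mul_assoc] using this
  have := key n le_rfl x
  rwa [Nat.sub_self, norm_iteratedFDeriv_zero] at this

lemma psi_bound (d : ℕ) (hd : 2 ≤ d) (ψ₀ : Ed d → ℂ) (hψ : Admissible d ψ₀) :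
    ∃ B : ℝ, 0 ≤ B ∧ ∀ ξ, ‖𝓕 (psiOf d ψ₀) ξ‖ ≤ B ∧ ‖𝓕 (psiOf d ψ₀) ξ‖ ≤ B * ‖ξ‖ ^ d := by
  obtain ⟨hs, hsupp, -, hv⟩ := hψ
  have hc : HasCompactSupport ψ₀ := by
    refine HasCompactSupport.intro (isCompact_closedBall (0 : Ed d) (1 / 10)) ?_
    intro x hx
    by_contra h
    exact hx (by simpa using hsupp x h)
  let φ : SchwartzMap (Ed d) ℂ := hc.toSchwartzMap hs
  have hφ : (φ : Ed d → ℂ) = ψ₀ := rfl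
  have hφF : ((𝓕 φ : SchwartzMap (Ed d) ℂ) : Ed d → ℂ) = 𝓕 ψ₀ := by
    rw [SchwartzMap.fourier_coe, hφ]
  have hint : Integrable ψ₀ := hφ ▸ φ.integrable
  have hconv : ∀ ξ, 𝓕 (psiOf d ψ₀) ξ = 𝓕 ψ₀ ξ * 𝓕 ψ₀ ξ := by
    intro ξ
    rw [← Real.fourier_mul_convolution_eq hint hint ξ]
    rfl
  obtain ⟨B0, hB0⟩ := (𝓕 φ : SchwartzMap (Ed d) ℂ).decay' 0 0
  obtain ⟨B1, hB1⟩ := (𝓕 φ : SchwartzMap (Ed d) ℂ).decay' 0 d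
  have b0 : ∀ ξ, ‖𝓕 ψ₀ ξ‖ ≤ B0 := by
    intro ξ
    have := hB0 ξ
    simp only [pow_zero, one_mul, norm_iteratedFDeriv_zero] at this
    rw [← hφF]; exact this
  have b1 : ∀ ξ, ‖𝓕 ψ₀ ξ‖ ≤ B1 * ‖ξ‖ ^ d := by
    rw [← hφF]
    apply taylor_vanish _ d ((𝓕 φ : SchwartzMap (Ed d) ℂ).smooth d)
    · intro k hk
      rw [hφF]
      exact hv k (by omega)
    · intro x
      have := hB1 x
      rw [pow_zero, one_mul] at this
      exact this
  have p0 : 0 ≤ B0 := (norm_nonneg _).trans (b0 0)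
  refine ⟨max (B0 * B0) (B0 * B1), le_max_of_le_left (by positivity), fun ξ => ⟨?_, ?_⟩⟩
  · rw [hconv, norm_mul]
    refine le_trans ?_ (le_max_left _ _)
    gcongr <;> exact b0 ξ
  · rw [hconv, norm_mul]
    refine le_trans ?_ (mul_le_mul_of_nonneg_right (le_max_right _ _) (by positivity))
    rw [mul_assoc]
    exact mul_le_mul (b0 ξ) (b1 ξ) (norm_nonneg _) p0

lemma weight_int (d : ℕ) (hd : 2 ≤ d) (m q ρ : ℝ) (hq : 0 < q) (hmq : d < m * q) (hρ : 0 < ρ) :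
    ∫⁻ r in Ioi (0 : ℝ), ENNReal.ofReal (r ^ (d - 1) * (min 1 ((r * ρ) ^ (-m))) ^ q) ≤
      ENNReal.ofReal ((1 + 1 / (m * q - d)) * (ρ⁻¹) ^ d) := by
  have hρ' : 0 < ρ⁻¹ := inv_pos.2 hρ
  have hdd : (((d - 1 : ℕ)) : ℝ) = d - 1 := by rw [Nat.cast_sub (by omega)]; simp
  have hgap : 0 < m * q - d := by linarith
  rw [← Ioc_union_Ioi_eq_Ioi hρ'.le]
  refine (lintegral_union_le _ _ _).trans ?_
  rw [add_mul, one_mul, ENNReal.ofReal_add (by positivity) (by positivity)]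
  refine add_le_add ?_ ?_
  · have : ∫⁻ r in Ioc (0 : ℝ) ρ⁻¹, ENNReal.ofReal (r ^ (d - 1) * (min 1 ((r * ρ) ^ (-m))) ^ q) ≤
      ∫⁻ r in Ioc (0 : ℝ) ρ⁻¹, ENNReal.ofReal ((ρ⁻¹) ^ (d - 1)) := by
      apply setLIntegral_mono' measurableSet_Ioc
      intro r hr
      apply ENNReal.ofReal_le_ofReal
      have h1 : r ^ (d - 1) ≤ (ρ⁻¹) ^ (d - 1) := pow_le_pow_left₀ hr.1.le hr.2 _
      have h2 : 0 ≤ min 1 ((r * ρ) ^ (-m)) := le_min zero_le_one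
        (Real.rpow_nonneg (mul_nonneg hr.1.le hρ.le) _)
      have h3 : (min 1 ((r * ρ) ^ (-m))) ^ q ≤ 1 := Real.rpow_le_one h2 (min_le_left _ _) hq.le
      calc _ ≤ r ^ (d - 1) * 1 := mul_le_mul_of_nonneg_left h3 (pow_nonneg hr.1.le _)
        _ ≤ _ := by rw [mul_one]; exact h1
    refine this.trans ?_
    rw [setLIntegral_const, Real.volume_Ioc, sub_zero, ← ENNReal.ofReal_mul (by positivity),
      ← pow_succ, Nat.sub_add_cancel (by omega)]
  · set a : ℝ := d - 1 - m * q with ha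
    have ha1 : a < -1 := by linarith
    have hI := integrableOn_Ioi_rpow_of_lt ha1 hρ'
    have : ∫⁻ r in Ioi ρ⁻¹, ENNReal.ofReal (r ^ (d - 1) * (min 1 ((r * ρ) ^ (-m))) ^ q) ≤
      ∫⁻ r in Ioi ρ⁻¹, ENNReal.ofReal (ρ ^ (-(m * q)) * r ^ a) := by
      apply setLIntegral_mono' measurableSet_Ioi
      intro r hr
      have hr0 : 0 < r := hρ'.trans hr
      apply ENNReal.ofReal_le_ofReal
      have h2 : 0 ≤ min 1 ((r * ρ) ^ (-m)) := le_min zero_le_one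
        (Real.rpow_nonneg (by positivity) _)
      have h3 : (min 1 ((r * ρ) ^ (-m))) ^ q ≤ ((r * ρ) ^ (-m)) ^ q :=
        Real.rpow_le_rpow h2 (min_le_right _ _) hq.le
      calc _ ≤ r ^ (d - 1) * ((r * ρ) ^ (-m)) ^ q := mul_le_mul_of_nonneg_left h3 (by positivity)
        _ = _ := by
          rw [← Real.rpow_mul (by positivity), Real.mul_rpow hr0.le hρ.le, ← Real.rpow_natCast, hdd,
            ha, sub_eq_add_neg _ (m * q), Real.rpow_add hr0, neg_mul]
          ring
    refine this.trans ?_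
    rw [← ofReal_integral_eq_lintegral_ofReal (hI.const_mul _)]
    · apply ENNReal.ofReal_le_ofReal
      rw [integral_const_mul, integral_Ioi_rpow_of_lt ha1 hρ']
      apply le_of_eq
      have e : (ρ⁻¹) ^ (a + 1) = (ρ⁻¹) ^ d * (ρ ^ (-(m * q)))⁻¹ := by
        rw [ha, ← Real.rpow_natCast, ← Real.inv_rpow hρ.le, ← Real.rpow_add hρ']
        congr 1; ring
      have e2 : a + 1 = -(m * q - d) := by rw [ha]; ring
      have e3 : 0 < ρ ^ (-(m * q)) := Real.rpow_pos_of_pos hρ _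
      rw [e, e2]
      field_simp
    · filter_upwards [ae_restrict_mem measurableSet_Ioi] with r hr
      have hr0 : 0 < r := hρ'.trans hr
      simp only [Pi.zero_apply]; positivity

/-- the `L^∞` Fourier transform bound
`‖K̂ ψ̂‖_∞ ≤ C_p (∫_0^∞ |κ(r)|^p r^{d-1} dr)^{1/p}` for `K = ∫_0^∞ κ(r) σ_r dr`,
where `K̂(ξ) = ∫_0^∞ κ(r) σ̂_r(ξ) dr`. -/
theorem fourier_transform_bound
    (d : ℕ) (hd : 2 ≤ d) (p : ℝ) (hp1 : 1 ≤ p)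
    (hp : p < 2 * (d : ℝ) / ((d : ℝ) + 1))
    (ψ₀ : Ed d → ℂ) (hψ : Admissible d ψ₀) :
    ∃ C : ℝ, 0 < C ∧
      ∀ κ : ℝ → ℂ, Measurable κ →
        (∫⁻ r in Set.Ioi (0 : ℝ), ENNReal.ofReal (‖κ r‖ ^ p * r ^ (d - 1))) < ⊤ →
        ∀ ξ : Ed d,
          ENNReal.ofReal
              ‖(∫ r in Set.Ioi (0 : ℝ), κ r *
                  ∫ x, Complex.exp (-(((2 * Real.pi * ⟪ξ, x⟫) : ℝ) : ℂ) * Complex.I)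
                    ∂(sphereM d r)) *
                𝓕 (psiOf d ψ₀) ξ‖ ≤
            ENNReal.ofReal C *
              (∫⁻ r in Set.Ioi (0 : ℝ),
                  ENNReal.ofReal (‖κ r‖ ^ p * r ^ (d - 1))) ^ (1 / p) := by
  
  obtain ⟨A, hA, hS⟩ := sphere_fourier_bound d hd
  obtain ⟨B, hB, hψB⟩ := psi_bound d hd ψ₀ hψ
  have h2d : (2 : ℝ) ≤ d := by exact_mod_cast hd
  have hdd : (((d - 1 : ℕ)) : ℝ) = d - 1 := by rw [Nat.cast_sub (by omega)]; simp
  have hpd : p * (d + 1) < 2 * d := by rwa [lt_div_iff₀ (by linarith)] at hp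
  rcases hp1.eq_or_lt with rfl | hp1
  · refine ⟨A * B + 1, by positivity, fun κ hκ _ ξ => ?_⟩
    rw [norm_mul, ENNReal.ofReal_mul (norm_nonneg _), ofReal_norm]
    have h1 : ‖∫ r in Set.Ioi (0 : ℝ), κ r *
                  ∫ x, Complex.exp (-(((2 * Real.pi * ⟪ξ, x⟫) : ℝ) : ℂ) * Complex.I)
                    ∂(sphereM d r)‖ₑ ≤ ENNReal.ofReal A * ∫⁻ r in Set.Ioi (0 : ℝ),
                  ENNReal.ofReal (‖κ r‖ ^ (1 : ℝ) * r ^ (d - 1)) := by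
      refine (enorm_integral_le_lintegral_enorm _).trans ?_
      rw [← lintegral_const_mul _ (by fun_prop)]
      apply setLIntegral_mono' measurableSet_Ioi
      intro r hr
      rw [← ofReal_norm, ← ENNReal.ofReal_mul hA, norm_mul, Real.rpow_one]
      apply ENNReal.ofReal_le_ofReal
      calc _ ≤ ‖κ r‖ * (A * r ^ (d - 1)) := by gcongr; exact (hS r hr ξ).1
        _ = _ := by ring
    have h2 : ENNReal.ofReal ‖𝓕 (psiOf d ψ₀) ξ‖ ≤ ENNReal.ofReal B :=
      ENNReal.ofReal_le_ofReal (hψB ξ).1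
    refine (mul_le_mul' h1 h2).trans ?_
    rw [one_div_one, ENNReal.rpow_one, mul_right_comm, ← ENNReal.ofReal_mul hA]
    gcongr
    linarith
  · set q : ℝ := p / (p - 1) with hq
    have hpq : p.HolderConjugate q := Real.HolderConjugate.conjExponent hp1
    have hq0 : 0 < q := hpq.symm.pos
    set m : ℝ := ((d : ℝ) - 1) / 2 with hm
    have hmq : d < m * q := by
      rw [hm, hq, div_mul_div_comm, lt_div_iff₀ (by linarith)]
      nlinarith
    set D : ℝ := 1 + 1 / (m * q - d) with hD
    have hD0 : 0 < D := by
      have : 0 < m * q - d := by linarith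
      positivity
    refine ⟨A * (D ^ (1 / q) * B) + 1, by positivity, fun κ hκ _ ξ => ?_⟩
    rcases eq_or_ne ξ 0 with rfl | hξ
    · have : 𝓕 (psiOf d ψ₀) 0 = 0 := by
        have := (hψB 0).2
        rw [norm_zero, zero_pow (by omega), mul_zero] at this
        exact norm_le_zero_iff.1 this
      rw [this, mul_zero, norm_zero, ENNReal.ofReal_zero]
      exact zero_le
    have hρ : 0 < ‖ξ‖ := norm_pos_iff.2 hξ
    set ρ := ‖ξ‖ with hρe
    rw [norm_mul, ENNReal.ofReal_mul (norm_nonneg _), ofReal_norm]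
    set F : ℝ → ℝ≥0∞ := fun r => ENNReal.ofReal (‖κ r‖ * r ^ (((d : ℝ) - 1) / p)) with hF
    set G : ℝ → ℝ≥0∞ := fun r =>
      ENNReal.ofReal (r ^ (((d : ℝ) - 1) / q) * min 1 ((r * ρ) ^ (-m))) with hG
    have hw : ∀ r : ℝ, 0 < r → 0 ≤ min 1 ((r * ρ) ^ (-m)) := fun r hr =>
      le_min zero_le_one (Real.rpow_nonneg (by positivity) _)
    have h1 : ‖∫ r in Set.Ioi (0 : ℝ), κ r *
                  ∫ x, Complex.exp (-(((2 * Real.pi * ⟪ξ, x⟫) : ℝ) : ℂ) * Complex.I)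
                    ∂(sphereM d r)‖ₑ ≤ ENNReal.ofReal A * ∫⁻ r in Set.Ioi (0 : ℝ), (F * G) r := by
      refine (enorm_integral_le_lintegral_enorm _).trans ?_
      rw [← lintegral_const_mul _ (by simp only [hF, hG]; fun_prop)]
      apply setLIntegral_mono' measurableSet_Ioi
      intro r hr
      have hr0 : 0 < r := hr
      have e : r ^ (d - 1) = r ^ (((d : ℝ) - 1) / p) * r ^ (((d : ℝ) - 1) / q) := by
        rw [← Real.rpow_add hr0, ← Real.rpow_natCast, hdd, div_eq_mul_inv, div_eq_mul_inv,
          ← mul_add, hpq.inv_add_inv_eq_one, mul_one]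
      simp only [Pi.mul_apply, hF, hG]
      rw [← ofReal_norm, ← ENNReal.ofReal_mul (by positivity), ← ENNReal.ofReal_mul hA,
        norm_mul]
      apply ENNReal.ofReal_le_ofReal
      have hb : ‖∫ x, Complex.exp (-(((2 * Real.pi * ⟪ξ, x⟫) : ℝ) : ℂ) * Complex.I)
                    ∂(sphereM d r)‖ ≤ A * r ^ (d - 1) * min 1 ((r * ρ) ^ (-m)) := by
        rcases min_cases 1 ((r * ρ) ^ (-m)) with h | h
        · rw [h.1, mul_one]; exact (hS r hr0 ξ).1
        · rw [h.1]; exact (hS r hr0 ξ).2 hξ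
      refine (mul_le_mul_of_nonneg_left hb (norm_nonneg _)).trans (le_of_eq ?_)
      rw [e]; ring
    have h2 := ENNReal.lintegral_mul_le_Lp_mul_Lq (volume.restrict (Ioi (0 : ℝ))) hpq
      (f := F) (g := G) (by simp only [hF]; fun_prop) (by simp only [hG]; fun_prop)
    have h3 : ∫⁻ r in Ioi (0 : ℝ), F r ^ p =
        ∫⁻ r in Set.Ioi (0 : ℝ), ENNReal.ofReal (‖κ r‖ ^ p * r ^ (d - 1)) := by
      apply setLIntegral_congr_fun measurableSet_Ioi
      intro r hr
      have hr0 : 0 < r := hr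
      simp only [hF]
      rw [ENNReal.ofReal_rpow_of_nonneg (by positivity) hpq.nonneg,
        Real.mul_rpow (norm_nonneg _) (by positivity), ← Real.rpow_mul hr0.le,
        div_mul_cancel₀ _ hpq.pos.ne', ← hdd, Real.rpow_natCast]
    have h4 : ∫⁻ r in Ioi (0 : ℝ), G r ^ q ≤ ENNReal.ofReal (D * (ρ⁻¹) ^ d) := by
      refine le_trans (le_of_eq ?_) (weight_int d hd m q ρ hq0 hmq hρ)
      apply setLIntegral_congr_fun measurableSet_Ioi
      intro r hr
      have hr0 : 0 < r := hr
      simp only [hG]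
      rw [ENNReal.ofReal_rpow_of_nonneg (mul_nonneg (by positivity) (hw r hr0)) hq0.le,
        Real.mul_rpow (by positivity) (hw r hr0), ← Real.rpow_mul hr0.le,
        div_mul_cancel₀ _ hq0.ne', ← hdd, Real.rpow_natCast]
    have h5 : (∫⁻ r in Ioi (0 : ℝ), G r ^ q) ^ (1 / q) ≤
        ENNReal.ofReal (D ^ (1 / q) * ((ρ⁻¹) ^ d) ^ (1 / q)) := by
      refine (ENNReal.rpow_le_rpow h4 (by positivity)).trans (le_of_eq ?_)
      rw [ENNReal.ofReal_rpow_of_nonneg (by positivity) (by positivity),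
        Real.mul_rpow hD0.le (by positivity)]
    have h6 : ‖𝓕 (psiOf d ψ₀) ξ‖ ≤ B * (ρ ^ d) ^ (1 / q) := by
      rcases le_total 1 (ρ ^ d) with h | h
      · have := Real.one_le_rpow h (by positivity : 0 ≤ 1 / q)
        have h0 := (hψB ξ).1
        nlinarith
      · have hq1 : 1 / q ≤ 1 := by
          rw [div_le_one hq0]; exact hpq.symm.lt.le
        have : ρ ^ d ≤ (ρ ^ d) ^ (1 / q) := by
          have := Real.rpow_le_rpow_of_exponent_ge (by positivity) h hq1
          rwa [Real.rpow_one] at this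
        exact (hψB ξ).2.trans (mul_le_mul_of_nonneg_left this hB)
    rw [h3] at h2
    set J := (∫⁻ r in Set.Ioi (0 : ℝ), ENNReal.ofReal (‖κ r‖ ^ p * r ^ (d - 1))) ^ (1 / p)
    have h7 : ((ρ⁻¹) ^ d) ^ (1 / q) * (ρ ^ d) ^ (1 / q) = 1 := by
      rw [← Real.mul_rpow (by positivity) (by positivity), ← mul_pow, inv_mul_cancel₀ hρ.ne',
        one_pow, Real.one_rpow]
    calc _ ≤ (ENNReal.ofReal A * (J * ENNReal.ofReal (D ^ (1 / q) * ((ρ⁻¹) ^ d) ^ (1 / q)))) *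
          ENNReal.ofReal (B * (ρ ^ d) ^ (1 / q)) :=
          mul_le_mul' (h1.trans (mul_le_mul' le_rfl (h2.trans (mul_le_mul' le_rfl h5))))
            (ENNReal.ofReal_le_ofReal h6)
      _ = (ENNReal.ofReal A * (ENNReal.ofReal (D ^ (1 / q) * ((ρ⁻¹) ^ d) ^ (1 / q)) *
          ENNReal.ofReal (B * (ρ ^ d) ^ (1 / q)))) * J := by ring
      _ = ENNReal.ofReal (A * (D ^ (1 / q) * B)) * J := by
        rw [← ENNReal.ofReal_mul (by positivity), ← ENNReal.ofReal_mul hA]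
        congr 3
        calc _ = D ^ (1 / q) * B * (((ρ⁻¹) ^ d) ^ (1 / q) * (ρ ^ d) ^ (1 / q)) := by ring
          _ = _ := by rw [h7, mul_one]
      _ ≤ _ := by
        gcongr
        linarith
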